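/- There exists a bidirected necklace grid whose vertical necklaces are bidirected rays that contains no dominated directed necklace grid. -/

import Mathlib

variable {V : Type*}

/-- A finite directed path, given as a nonempty duplicate-free list of vertices. -/
def IsDipath (D : Digraph V) (p : List V) : Prop :=
  p ≠ [] ∧ p.Nodup ∧ p.Chain' D.Adj

def StartsIn (p : List V) (A : Set V) : Prop := ∃ a ∈ A, p.head? = some a

def EndsIn (p : List V) (B : Set V) : Prop := ∃ b ∈ B, p.getLast? = some b

def ListsDisjoint (p q : List V) : Prop := ∀ v ∈ p, v ∉ q

/-- The internal vertices of a path. -/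
def Internals (p : List V) : List V := p.tail.dropLast

def InternallyAvoids (p : List V) (U : Set V) : Prop := ∀ v ∈ Internals p, v ∉ U

/-- Reachability by a directed path with all vertices in `s`. -/
def ReachOn (D : Digraph V) (s : Set V) : V → V → Prop :=
  Relation.ReflTransGen (fun a b => a ∈ s ∧ b ∈ s ∧ D.Adj a b)

def StrongOn (D : Digraph V) (s : Set V) : Prop :=
  ∀ u ∈ s, ∀ v ∈ s, ReachOn D s u v

/-- `H` witnesses that `N` is a necklace. -/
def IsNecklaceWitness (D : Digraph V) (N : Set V) (H : ℕ → Set V) : Prop :=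
  (∀ n, (H n).Finite ∧ (H n).Nonempty ∧ StrongOn D (H n)) ∧
  N = ⋃ n, H n ∧
  ∀ i j : ℕ, (H i ∩ H j).Nonempty ↔ (i ≤ j + 1 ∧ j ≤ i + 1)

/-- The edges of `D` leaving or entering `N` with their `N`-endpoint in `K`. -/
def CrossEdgesAt (D : Digraph V) (N K : Set V) : Set (V × V) :=
  {e | D.Adj e.1 e.2 ∧ ((e.1 ∈ K ∧ e.2 ∉ N) ∨ (e.2 ∈ K ∧ e.1 ∉ N))}

/-- Attachment restrictions for a vertical necklace in a necklace grid: at most one edge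
leaves or enters the necklace in `H ℓ` for odd `ℓ`, no such edge meets
`H ℓ \ (H (ℓ-1) ∪ H (ℓ+1))` for even `ℓ`. -/
def NecklaceAttachOK (D : Digraph V) (N : Set V) (H : ℕ → Set V) : Prop :=
  (∀ l, Odd l → (CrossEdgesAt D N (H l)).Subsingleton) ∧
  (∀ l, Even l → CrossEdgesAt D N (H l \ (H (l - 1) ∪ H (l + 1))) = ∅)

/-- `u v` is an edge of the path `L`. -/
def ConsecIn (L : List V) (u v : V) : Prop := ∃ l₁ l₂, L = l₁ ++ u :: v :: l₂

def NeckUnion (neck : ℕ → Set V) : Set V := ⋃ i, neck i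

/-- `L` meets all necklaces `0, …, n`, meets no other necklace, and meets them in
increasing order. -/
def VisitsUp (neck : ℕ → Set V) (n : ℕ) (L : List V) : Prop :=
  (∀ j ≤ n, ∃ v ∈ L, v ∈ neck j) ∧
  (∀ v ∈ L, ∀ j, v ∈ neck j → j ≤ n) ∧
  ∀ s t, ∀ hs : s < L.length, ∀ ht : t < L.length, s < t → ∀ j j',
    L.get ⟨s, hs⟩ ∈ neck j → L.get ⟨t, ht⟩ ∈ neck j' → j ≤ j'

/-- `L` meets all necklaces `0, …, n`, meets no other necklace, and meets them in
decreasing order. -/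
def VisitsDown (neck : ℕ → Set V) (n : ℕ) (L : List V) : Prop :=
  (∀ j ≤ n, ∃ v ∈ L, v ∈ neck j) ∧
  (∀ v ∈ L, ∀ j, v ∈ neck j → j ≤ n) ∧
  ∀ s t, ∀ hs : s < L.length, ∀ ht : t < L.length, s < t → ∀ j j',
    L.get ⟨s, hs⟩ ∈ neck j → L.get ⟨t, ht⟩ ∈ neck j' → j' ≤ j

/-- Common part of the definition of a (subdivision of a) necklace grid: disjoint
vertical necklaces with attachment restrictions, pairwise disjoint girders occurring at
increasing heights on the necklaces, and every edge lying in a necklace or a girder. -/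
structure IsNecklaceGridBase (G : Digraph V) (neck : ℕ → Set V)
    (H : ℕ → ℕ → Set V) (Gird : ℕ → List V) : Prop where
  disj : ∀ i j, i ≠ j → Disjoint (neck i) (neck j)
  neckwit : ∀ i, IsNecklaceWitness G (neck i) (H i)
  attach : ∀ i, NecklaceAttachOK G (neck i) (H i)
  gpath : ∀ n, 1 ≤ n → IsDipath G (Gird n)
  gdisj : ∀ m n, 1 ≤ m → 1 ≤ n → m ≠ n → ListsDisjoint (Gird m) (Gird n)
  gheight : ∀ m n, 1 ≤ m → m < n → ∀ i l l',
    (∃ v ∈ Gird m, v ∈ H i l) → (∃ v ∈ Gird n, v ∈ H i l') → l < l'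
  edges : ∀ u v, G.Adj u v →
    (∃ i, u ∈ neck i ∧ v ∈ neck i) ∨ ∃ n, 1 ≤ n ∧ ConsecIn (Gird n) u v

/-- A bidirected necklace grid: each girder is an upward staircase from necklace `0` to
necklace `n` followed by a downward staircase back to necklace `0`. -/
def IsBidirNecklaceGrid (G : Digraph V) (neck : ℕ → Set V)
    (H : ℕ → ℕ → Set V) (Gird : ℕ → List V) : Prop :=
  IsNecklaceGridBase G neck H Gird ∧ ∀ n, 1 ≤ n → ∃ U W : List V,
    Gird n = U ++ W ∧ U ≠ [] ∧ W ≠ [] ∧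
    StartsIn U (neck 0) ∧ EndsIn U (neck n) ∧ VisitsUp neck n U ∧
    StartsIn W (neck n) ∧ EndsIn W (neck 0) ∧ VisitsDown neck n W

/-- An outward-oriented dominated directed necklace grid: each girder is an upward
staircase from necklace `0` to necklace `n` followed by an arch back to necklace `0`
internally avoiding all necklaces. -/
def IsDomDirNecklaceGridOut (G : Digraph V) (neck : ℕ → Set V)
    (H : ℕ → ℕ → Set V) (Gird : ℕ → List V) : Prop :=
  IsNecklaceGridBase G neck H Gird ∧ ∀ n, 1 ≤ n → ∃ U W : List V,
    Gird n = U ++ W ∧ U ≠ [] ∧ W ≠ [] ∧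
    StartsIn U (neck 0) ∧ EndsIn U (neck n) ∧ VisitsUp neck n U ∧
    StartsIn W (neck n) ∧ EndsIn W (neck 0) ∧ InternallyAvoids W (NeckUnion neck)

/-- An inward-oriented dominated directed necklace grid: each girder is an arch from
necklace `0` to necklace `n` followed by a downward staircase back to necklace `0`. -/
def IsDomDirNecklaceGridIn (G : Digraph V) (neck : ℕ → Set V)
    (H : ℕ → ℕ → Set V) (Gird : ℕ → List V) : Prop :=
  IsNecklaceGridBase G neck H Gird ∧ ∀ n, 1 ≤ n → ∃ W U : List V,
    Gird n = W ++ U ∧ W ≠ [] ∧ U ≠ [] ∧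
    StartsIn W (neck 0) ∧ EndsIn W (neck n) ∧ InternallyAvoids W (NeckUnion neck) ∧
    StartsIn U (neck n) ∧ EndsIn U (neck 0) ∧ VisitsDown neck n U

/-- The vertical necklaces are bidirected rays `𝒟(S)`. -/
def NecksAreBidirRays (G : Digraph V) (neck : ℕ → Set V) (r : ℕ → ℕ → V) : Prop :=
  ∀ i, Function.Injective (r i) ∧ neck i = Set.range (r i) ∧
    ∀ n, G.Adj (r i n) (r i (n + 1)) ∧ G.Adj (r i (n + 1)) (r i n)

/-- The arches are single edges, `archE n` being the arch of the `n`-th girder. -/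
def ArchesAreEdges (neck : ℕ → Set V) (Gird : ℕ → List V) (archE : ℕ → V × V) : Prop :=
  ∀ n, 1 ≤ n → ∃ U, Gird n = U ++ [(archE n).1, (archE n).2] ∧
    (archE n).1 ∈ neck n ∧ (archE n).2 ∈ neck 0

section Reach

theorem ReachOn.mono {D E : Digraph V} {s t : Set V} {u v : V} (h : ReachOn D s u v)
    (hDE : ∀ a b, D.Adj a b → E.Adj a b) (hst : s ⊆ t) : ReachOn E t u v :=
  Relation.ReflTransGen.mono (fun _ _ h => ⟨hst h.1, hst h.2.1, hDE _ _ h.2.2⟩) _ _ h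

theorem ReachOn.mono_set {D : Digraph V} {s t : Set V} {u v : V} (h : ReachOn D s u v)
    (hst : s ⊆ t) : ReachOn D t u v :=
  h.mono (fun _ _ => id) hst

theorem ReachOn.trans {D : Digraph V} {s : Set V} {u v w : V} (h : ReachOn D s u v)
    (h' : ReachOn D s v w) : ReachOn D s u w :=
  Relation.ReflTransGen.trans h h'

theorem ReachOn.symm {D : Digraph V} (hD : ∀ a b, D.Adj a b → D.Adj b a) {s : Set V} {u v : V}
    (h : ReachOn D s u v) : ReachOn D s v u := by
  induction h with
  | refl => exact .refl
  | tail _ h ih => exact .head ⟨h.2.1, h.1, hD _ _ h.2.2⟩ ih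

theorem ReachOn.mem_right {D : Digraph V} {s : Set V} {u v : V} (h : ReachOn D s u v)
    (hu : u ∈ s) : v ∈ s := by
  cases h with
  | refl => exact hu
  | tail _ h => exact h.2.1

/-- A directed walk stays connected on every contiguous piece. -/
theorem reachOn_of_isChain {D : Digraph V} {l : List V} (hl : l.IsChain D.Adj) {S : Set V}
    {s t : ℕ} (hst : s ≤ t) (ht : t < l.length)
    (hS : ∀ i (hi : i < l.length), s ≤ i → i ≤ t → l[i] ∈ S) :
    ReachOn D S l[s] l[t] := by
  induction t, hst using Nat.le_induction with
  | base => exact .refl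
  | succ t hst ih =>
    refine .tail (ih (by omega) fun i hi h h' => hS i hi h (by omega)) ⟨?_, ?_, ?_⟩
    · exact hS t _ hst (by omega)
    · exact hS _ _ (by omega) le_rfl
    · exact List.isChain_iff_getElem.1 hl t ht

end Reach

section Plane

/-- The height at which the vertex `(i, h)`, the `h`-th vertex of column `i`, is drawn. -/
def gridHeight (v : ℕ × ℕ) : ℕ := 10 * v.1 + v.2

/-- The undirected planar grid in which column `i` starts at height `10 * i`. -/
def planeGrid : Digraph (ℕ × ℕ) where
  Adj u v := (u.1 = v.1 ∧ (v.2 = u.2 + 1 ∨ u.2 = v.2 + 1)) ∨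
    (gridHeight u = gridHeight v ∧ (v.1 = u.1 + 1 ∨ u.1 = v.1 + 1))

theorem planeGrid_symm (u v : ℕ × ℕ) (h : planeGrid.Adj u v) : planeGrid.Adj v u := by
  simp only [planeGrid] at *
  omega

theorem finite_gridHeight_lt (k : ℕ) : {v | gridHeight v < k}.Finite := by
  refine ((Set.finite_Iio k).prod (Set.finite_Iio k)).subset fun v hv => ?_
  simp only [gridHeight, Set.mem_ofPred_eq, Set.mem_prod, Set.mem_Iio] at *
  omega

/-- The step `u v` crosses from column `x` to column `x + 1` or back, at height at least `y`. -/
def stepCrossing (u v : ℕ × ℕ) (x y : ℕ) : ZMod 2 :=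
  if y ≤ gridHeight u ∧ ((u.1 = x ∧ v.1 = x + 1) ∨ (v.1 = x ∧ u.1 = x + 1)) then 1 else 0

/-- The parity `c x y` of the number of crossings between columns `x` and `x + 1` at height at
least `y` of a walk in `S` is locally constant off `S`, except below the ends of the walk. -/
theorem exists_crossing_parity {S : Set (ℕ × ℕ)} {p q : ℕ × ℕ} (h : ReachOn planeGrid S p q) :
    ∃ (c : ℕ → ℕ → ZMod 2) (M : ℕ), (∀ x y, M ≤ y → c x y = 0) ∧
      (∀ v ∉ S, c v.1 (gridHeight v) = c v.1 (gridHeight v + 1)) ∧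
      (∀ v ∉ S, ∀ x, v.1 = x + 1 → c x (gridHeight v) + c v.1 (gridHeight v) =
        (if p.1 = v.1 ∧ gridHeight v < gridHeight p then 1 else 0) +
        (if q.1 = v.1 ∧ gridHeight v < gridHeight q then 1 else 0)) ∧
      (∀ x k, (∀ v ∈ S, k ≤ gridHeight v) →
        c x k = (if p.1 ≤ x then 1 else 0) + (if q.1 ≤ x then 1 else 0)) := by
  induction h with
  | refl => exact ⟨fun _ _ => 0, 0, by simp, by simp, by simp [CharTwo.add_self_eq_zero],
      by simp [CharTwo.add_self_eq_zero]⟩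
  | @tail q r _ hqr ih =>
    obtain ⟨c, M, hM, hv, hh, hk⟩ := ih
    obtain ⟨hq, hr, hqr⟩ := hqr
    have two : (1 : ZMod 2) + 1 = 0 := by decide
    refine ⟨fun x y => c x y + stepCrossing q r x y, M + gridHeight q + 1, ?_, ?_, ?_, ?_⟩
    · intro x y hy
      beta_reduce
      rw [hM x y (by omega), stepCrossing, if_neg (by omega), add_zero]
    · intro v hvS
      have h1 : v ≠ q := fun h => hvS (h ▸ hq)
      have h2 : v ≠ r := fun h => hvS (h ▸ hr)
      rw [Ne, Prod.ext_iff] at h1 h2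
      simp only [planeGrid, gridHeight] at hqr
      beta_reduce
      rw [hv v hvS]
      congr 1
      simp only [stepCrossing, gridHeight]
      congr 1
      apply propext
      omega
    · intro v hvS x hx
      have h1 : v ≠ q := fun h => hvS (h ▸ hq)
      have h2 : v ≠ r := fun h => hvS (h ▸ hr)
      rw [Ne, Prod.ext_iff] at h1 h2
      have key : stepCrossing q r x (gridHeight v) + stepCrossing q r v.1 (gridHeight v) =
          (if q.1 = v.1 ∧ gridHeight v < gridHeight q then 1 else 0) +
          (if r.1 = v.1 ∧ gridHeight v < gridHeight r then 1 else 0) := by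
        simp only [planeGrid, gridHeight] at hqr
        unfold stepCrossing
        split_ifs <;> simp only [gridHeight] at * <;> first | omega | decide
      have := hh v hvS x hx
      linear_combination this + key +
        (if q.1 = v.1 ∧ gridHeight v < gridHeight q then 1 else 0) * two
    · intro x k hS
      have h1 := hS q hq
      have key : stepCrossing q r x k =
          (if q.1 ≤ x then 1 else 0) + (if r.1 ≤ x then 1 else 0) := by
        simp only [planeGrid, gridHeight] at hqr h1
        unfold stepCrossing
        split_ifs <;> simp only [gridHeight] at * <;> first | omega | decide
      have := hk x k hS
      linear_combination this + key + (if q.1 ≤ x then 1 else 0) * two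

/-- Above height `k`, a walk joining two vertices of height `k` encloses everything that starts
between them. -/
theorem bounded_of_enclosed {S s : Set (ℕ × ℕ)} {p q b : ℕ × ℕ} {k : ℕ}
    (h : ReachOn planeGrid S p q) (hS : ∀ v ∈ S, k ≤ gridHeight v) (hp : gridHeight p = k)
    (hq : gridHeight q = k) (hb : gridHeight b = k) (hpb : p.1 < b.1) (hbq : b.1 < q.1)
    (hs : ∀ v ∈ s, k ≤ gridHeight v) (hsS : ∀ v ∈ s, v ∉ S) :
    ∃ M, ∀ z, ReachOn planeGrid s b z → gridHeight z < M := by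
  obtain ⟨c, M, hM, hv, hh, hk⟩ := exists_crossing_parity h
  refine ⟨M, fun z hz => ?_⟩
  have hor : ∀ v ∈ s, ∀ x, v.1 = x + 1 → c x (gridHeight v) = c v.1 (gridHeight v) := by
    intro v hvs x hx
    have := hh v (hsS v hvs) x hx
    have := hs v hvs
    rw [if_neg (by omega), if_neg (by omega), add_zero] at *
    exact CharTwo.add_eq_zero.1 ‹_›
  have one : c z.1 (gridHeight z) = 1 := by
    induction hz with
    | refl => rw [hb, hk _ _ hS, if_pos hpb.le, if_neg (by omega), add_zero]
    | @tail v w _ hvw ih =>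
      obtain ⟨hvs, hws, hvw⟩ := hvw
      rw [← ih]
      rcases hvw with ⟨h1, h2 | h2⟩ | ⟨h1, h2 | h2⟩
      · rw [hv v (hsS v hvs), ← h1]
        congr 1
        simp only [gridHeight]
        omega
      · rw [hv w (hsS w hws), ← h1]
        congr 1
        simp only [gridHeight]
        omega
      · rw [← hor w hws _ h2, h1]
      · rw [← hor v hvs _ h2, h1]
  by_contra hlt
  rw [hM _ _ (by omega)] at one
  exact zero_ne_one one

/-- Above height `k` there are no three disjoint unbounded connected sets, each starting at
height `k`, any two of which are joined off the third. -/
theorem not_three_mutually_linked {A B C Y : Set (ℕ × ℕ)} {a b c : ℕ × ℕ} {k : ℕ}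
    (hY : Y = {v | k ≤ gridHeight v})
    (ha : gridHeight a = k) (hb : gridHeight b = k) (hc : gridHeight c = k)
    (hab : a ≠ b) (hbc : b ≠ c) (hac : a ≠ c)
    (uA : ∀ M, ∃ z, ReachOn planeGrid (A ∩ Y) a z ∧ M ≤ gridHeight z)
    (uB : ∀ M, ∃ z, ReachOn planeGrid (B ∩ Y) b z ∧ M ≤ gridHeight z)
    (uC : ∀ M, ∃ z, ReachOn planeGrid (C ∩ Y) c z ∧ M ≤ gridHeight z)
    (lAB : ReachOn planeGrid (Y \ C) a b) (lBC : ReachOn planeGrid (Y \ A) b c)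
    (lAC : ReachOn planeGrid (Y \ B) a c) : False := by
  subst hY
  have key : ∀ {X : Set (ℕ × ℕ)} {p x q : ℕ × ℕ}, gridHeight p = k → gridHeight x = k →
      gridHeight q = k → (∀ M, ∃ z, ReachOn planeGrid (X ∩ {v | k ≤ gridHeight v}) x z ∧
      M ≤ gridHeight z) → ReachOn planeGrid ({v | k ≤ gridHeight v} \ X) p q →
      ¬ ((p.1 < x.1 ∧ x.1 < q.1) ∨ (q.1 < x.1 ∧ x.1 < p.1)) := by
    intro X p x q hp hx hq uX l h
    rcases h with ⟨h1, h2⟩ | ⟨h1, h2⟩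
    · obtain ⟨M, hM⟩ := bounded_of_enclosed (s := X ∩ {v | k ≤ gridHeight v}) l
        (fun v hv => hv.1) hp hq hx h1 h2
        (fun v hv => hv.2) (fun v hv hv' => hv'.2 hv.1)
      obtain ⟨z, hz, hz'⟩ := uX M
      exact absurd (hM z hz) (by omega)
    · obtain ⟨M, hM⟩ := bounded_of_enclosed (s := X ∩ {v | k ≤ gridHeight v})
        (l.symm planeGrid_symm) (fun v hv => hv.1) hq hp hx
        h1 h2 (fun v hv => hv.2) (fun v hv hv' => hv'.2 hv.1)
      obtain ⟨z, hz, hz'⟩ := uX M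
      exact absurd (hM z hz) (by omega)
  have h1 := key ha hb hc uB lAC
  have h2 := key ha hc hb uC lAB
  have h3 := key hb ha hc uA lBC
  rw [Ne, Prod.ext_iff] at hab hbc hac
  simp only [gridHeight] at ha hb hc
  omega

/-- A walk in `R` that descends below height `k` first reaches height exactly `k`. -/
theorem exists_reachOn_gridHeight_eq {R : Set (ℕ × ℕ)} {u v : ℕ × ℕ} {k : ℕ}
    (h : ReachOn planeGrid R u v) (hu : k ≤ gridHeight u) (hv : gridHeight v < k) :
    ∃ a, gridHeight a = k ∧ ReachOn planeGrid (R ∩ {v | k ≤ gridHeight v}) u a := by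
  have : (k ≤ gridHeight v ∧ ReachOn planeGrid (R ∩ {v | k ≤ gridHeight v}) u v) ∨
      ∃ a, gridHeight a = k ∧ ReachOn planeGrid (R ∩ {v | k ≤ gridHeight v}) u a := by
    clear hv
    induction h with
    | refl => exact .inl ⟨hu, .refl⟩
    | @tail v w _ hvw ih =>
      obtain ⟨hv, hw, hvw⟩ := hvw
      rcases ih with ⟨h1, h2⟩ | h
      · rcases le_or_gt k (gridHeight w) with h3 | h3
        · exact .inl ⟨h3, h2.tail ⟨⟨hv, h1⟩, ⟨hw, h3⟩, hvw⟩⟩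
        · refine .inr ⟨v, ?_, h2⟩
          simp only [planeGrid, gridHeight] at *
          omega
      · exact .inr h
  rcases this with h | h
  · omega
  · exact h

end Plane

section Necklace

/-- A finite set is eventually avoided by sets in which each point lies only finitely often. -/
theorem Set.Finite.eventually_notMem {F : Set V} (hF : F.Finite) {X : ℕ → Set V}
    (hX : ∀ v, ∃ N, ∀ n ≥ N, v ∉ X n) : ∀ᶠ n in Filter.atTop, ∀ v ∈ F, v ∉ X n :=
  (Filter.eventually_all_finite hF).2 fun v _ => Filter.eventually_atTop.2 (hX v)

theorem Set.Finite.eventually_notMem_of_disjoint {F : Set V} (hF : F.Finite) {X : ℕ → Set V}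
    (hX : ∀ m n, 1 ≤ m → 1 ≤ n → m ≠ n → Disjoint (X m) (X n)) :
    ∀ᶠ n in Filter.atTop, ∀ v ∈ F, v ∉ X n := by
  refine hF.eventually_notMem fun v => ?_
  by_cases h : ∃ m, 1 ≤ m ∧ v ∈ X m
  · obtain ⟨m, hm, hv⟩ := h
    exact ⟨m + 1, fun n hn hvn =>
      Set.disjoint_left.1 (hX m n hm (by omega) (by omega)) hv hvn⟩
  · push Not at h
    exact ⟨1, h⟩

variable {D : Digraph V} {N : Set V} {H : ℕ → Set V}

theorem IsNecklaceWitness.mono {E : Digraph V} (h : IsNecklaceWitness D N H)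
    (hDE : ∀ u v, D.Adj u v → E.Adj u v) : IsNecklaceWitness E N H :=
  ⟨fun n => ⟨(h.1 n).1, (h.1 n).2.1,
    fun u hu v hv => ((h.1 n).2.2 u hu v hv).mono hDE subset_rfl⟩, h.2⟩

theorem IsNecklaceWitness.strongOn_tail (h : IsNecklaceWitness D N H) (L : ℕ) :
    StrongOn D (⋃ n ≥ L, H n) := by
  have sub : ∀ n ≥ L, H n ⊆ ⋃ n ≥ L, H n := fun n hn => Set.subset_biUnion_of_mem hn
  have step : ∀ n ≥ L, ∀ u ∈ H n, ∀ v ∈ H n, ReachOn D (⋃ n ≥ L, H n) u v :=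
    fun n hn u hu v hv => ((h.1 n).2.2 u hu v hv).mono_set (sub n hn)
  have link : ∀ n, ∃ w ∈ H n, w ∈ H (n + 1) := fun n => (h.2.2 n (n + 1)).2 ⟨by omega, by omega⟩
  have key : ∀ i ≥ L, ∀ j ≥ i, ∀ u ∈ H i, ∀ v ∈ H j,
      ReachOn D (⋃ n ≥ L, H n) u v ∧ ReachOn D (⋃ n ≥ L, H n) v u := by
    intro i hi j hj u hu
    induction j, hj using Nat.le_induction with
    | base => exact fun v hv => ⟨step i hi u hu v hv, step i hi v hv u hu⟩
    | succ j hj ih =>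
      intro v hv
      obtain ⟨w, hw, hw'⟩ := link j
      exact ⟨(ih w hw).1.trans (step _ (by omega) w hw' v hv),
        (step _ (by omega) v hv w hw').trans (ih w hw).2⟩
  intro u hu v hv
  simp only [Set.mem_iUnion, exists_prop] at hu hv
  obtain ⟨i, hi, hu⟩ := hu
  obtain ⟨j, hj, hv⟩ := hv
  rcases le_total i j with hij | hij
  · exact (key i hi j hij u hu v hv).1
  · exact (key j hj i hij v hv u hu).2

theorem IsNecklaceWitness.strongOn (h : IsNecklaceWitness D N H) : StrongOn D N := by
  have := h.strongOn_tail 0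
  simpa [h.2.1] using this

theorem IsNecklaceWitness.eventually_disjoint (h : IsNecklaceWitness D N H) {F : Set V}
    (hF : F.Finite) : ∃ L, ∀ n ≥ L, ∀ v ∈ F, v ∉ H n := by
  refine Filter.eventually_atTop.1 (hF.eventually_notMem fun v => ?_)
  by_cases hv : ∃ i, v ∈ H i
  · obtain ⟨i, hi⟩ := hv
    refine ⟨i + 2, fun n hn hvn => ?_⟩
    have := (h.2.2 i n).1 ⟨v, hi, hvn⟩
    omega
  · push Not at hv
    exact ⟨0, fun n _ => hv n⟩

theorem IsNecklaceWitness.infinite (h : IsNecklaceWitness D N H) : N.Infinite := by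
  intro hN
  obtain ⟨L, hL⟩ := h.eventually_disjoint hN
  obtain ⟨v, hv⟩ := (h.1 L).2.1
  exact hL L le_rfl v (h.2.1 ▸ Set.mem_iUnion.2 ⟨L, hv⟩) hv

/-- A necklace has a strongly connected cofinite part avoiding a given finite set, which is the
whole necklace if that already avoids the finite set. -/
theorem IsNecklaceWitness.exists_tail (h : IsNecklaceWitness D N H) {F : Set V}
    (hF : F.Finite) : ∃ T ⊆ N, StrongOn D T ∧ (N \ T).Finite ∧ (∀ v ∈ T, v ∉ F) ∧
      ((∀ v ∈ F, v ∉ N) → T = N) := by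
  by_cases hFN : ∀ v ∈ F, v ∉ N
  · exact ⟨N, subset_rfl, h.strongOn, by simp, fun v hv hv' => hFN v hv' hv, fun _ => rfl⟩
  obtain ⟨L, hL⟩ := h.eventually_disjoint hF
  refine ⟨⋃ n ≥ L, H n, ?_, h.strongOn_tail L, ?_, ?_, fun h => absurd h hFN⟩
  · rw [h.2.1]
    exact Set.iUnion₂_subset fun n _ => Set.subset_iUnion H n
  · refine ((Set.finite_Iio L).biUnion fun n _ => (h.1 n).1).subset ?_
    rintro v ⟨hv, hv'⟩
    rw [h.2.1] at hv
    obtain ⟨n, hn⟩ := Set.mem_iUnion.1 hv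
    simp only [Set.mem_iUnion, exists_prop, not_exists, not_and] at hv' ⊢
    exact ⟨n, not_le.1 fun hL => hv' n hL hn, hn⟩
  · intro v hv hvF
    simp only [Set.mem_iUnion, exists_prop] at hv
    obtain ⟨n, hn, hv⟩ := hv
    exact hL n hn v hvF hv

end Necklace

section Obstruction

/-- The plane grid contains no disjoint necklaces `R 0, R 1, …` together with disjoint sets `X n`
such that `X n` links consecutive necklaces up to `R n` and contains an arch from `R 0` to `R n`
avoiding `R 1`. -/
theorem not_dominated_in_planeGrid {R X : ℕ → Set (ℕ × ℕ)} {H : ℕ → ℕ → Set (ℕ × ℕ)}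
    (hR : ∀ i j, i ≠ j → Disjoint (R i) (R j))
    (hH : ∀ i, IsNecklaceWitness planeGrid (R i) (H i))
    (hX : ∀ m n, 1 ≤ m → 1 ≤ n → m ≠ n → Disjoint (X m) (X n))
    (ladder : ∀ n j, j < n → ∃ u ∈ R j, ∃ v ∈ R (j + 1), u ∈ X n ∧ v ∈ X n ∧
      ReachOn planeGrid {w ∈ X n | ∀ i, w ∈ R i → i = j ∨ i = j + 1} u v)
    (arch : ∀ n, 2 ≤ n → ∃ u ∈ R 0, ∃ v ∈ R n, u ∈ X n ∧ v ∈ X n ∧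
      ReachOn planeGrid (X n \ R 1) u v) : False := by
  choose b hb using fun i => ((hH i).1 0).2.1
  have hbR : ∀ i, b i ∈ R i := fun i => (hH i).2.1 ▸ Set.mem_iUnion.2 ⟨0, hb i⟩
  obtain ⟨k, hk⟩ : ∃ k, ∀ i ≤ 2, gridHeight (b i) < k := by
    refine ⟨gridHeight (b 0) + gridHeight (b 1) + gridHeight (b 2) + 1, fun i hi => ?_⟩
    interval_cases i <;> omega
  set Y : Set (ℕ × ℕ) := {v | k ≤ gridHeight v} with hY
  have hF : Yᶜ.Finite := (finite_gridHeight_lt k).subset fun v hv => by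
    simpa [hY] using hv
  choose T hTR hT hTfin hTF hTeq using fun i => (hH i).exists_tail hF
  have hTY : ∀ i, T i ⊆ Y := fun i v hv => not_not.1 (hTF i v hv)
  have ne : ∀ {i j v}, v ∈ R i → v ∈ R j → i = j := fun {i j v} h h' => by
    by_contra hij
    exact Set.disjoint_left.1 (hR i j hij) h h'
  have unbounded : ∀ i M, ∃ z ∈ T i, M ≤ gridHeight z := by
    intro i M
    by_contra! h
    refine (hH i).infinite (((hTfin i).union ((finite_gridHeight_lt M).subset h)).subset ?_)
    intro v hv
    by_cases hvT : v ∈ T i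
    · exact .inr hvT
    · exact .inl ⟨hv, hvT⟩
  have base : ∀ i ≤ 2, ∃ a ∈ R i, gridHeight a = k ∧
      ∀ t ∈ T i, ReachOn planeGrid (R i ∩ Y) a t := by
    intro i hi
    obtain ⟨t, ht, -⟩ := unbounded i 0
    obtain ⟨a, ha, hta⟩ := exists_reachOn_gridHeight_eq
      ((hH i).strongOn t (hTR i ht) (b i) (hbR i)) (hTY i ht) (hk i hi)
    refine ⟨a, (hta.mem_right ⟨hTR i ht, hTY i ht⟩).1, ha, fun t' ht' => ?_⟩
    exact (hta.symm planeGrid_symm).trans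
      ((hT i t ht t' ht').mono_set fun v hv => ⟨hTR i hv, hTY i hv⟩)
  have link : ∀ j, ∃ u ∈ T j, ∃ v ∈ T (j + 1),
      ReachOn planeGrid {w ∈ Y | ∀ i, w ∈ R i → i = j ∨ i = j + 1} u v := by
    intro j
    obtain ⟨n, hn, hjn⟩ := (((hF.union ((hTfin j).union (hTfin (j + 1)))
      ).eventually_notMem_of_disjoint hX).and (Filter.eventually_gt_atTop j)).exists
    obtain ⟨u, hu, v, hv, huX, hvX, h⟩ := ladder n j hjn
    refine ⟨u, ?_, v, ?_, h.mono_set fun w hw => ⟨?_, hw.2⟩⟩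
    · by_contra hc
      exact hn u (.inr (.inl ⟨hu, hc⟩)) huX
    · by_contra hc
      exact hn v (.inr (.inr ⟨hv, hc⟩)) hvX
    · by_contra hc
      exact hn w (.inl hc) hw.1
  have join : ∀ n ≥ 2, ∀ u ∈ T 2, ∀ v ∈ T n, ReachOn planeGrid (Y \ R 1) u v := by
    intro n hn
    have sub : ∀ n ≥ 2, T n ⊆ Y \ R 1 := fun n hn v hv =>
      ⟨hTY n hv, fun hv' => absurd (ne (hTR n hv) hv') (by omega)⟩
    induction n, hn using Nat.le_induction with
    | base => exact fun u hu v hv => (hT 2 u hu v hv).mono_set (sub 2 le_rfl)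
    | succ n hn ih =>
      intro u hu v hv
      obtain ⟨w, hw, w', hw', h⟩ := link n
      refine (ih u hu w hw).trans ((ReachOn.mono_set (t := Y \ R 1) h
        fun x hx => ⟨hx.1, fun hx' => ?_⟩).trans
        ((hT _ w' hw' v hv).mono_set (sub _ (by omega))))
      have := hx.2 1 hx'
      omega
  have far : ∃ u ∈ T 0, ∃ v ∈ T 2, ReachOn planeGrid (Y \ R 1) u v := by
    obtain ⟨n, ⟨hn, hn'⟩, h2⟩ := ((((hF.union (hTfin 0)).eventually_notMem_of_disjoint hX).and
      (hF.eventually_notMem_of_disjoint fun m n _ _ => hR m n)).and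
      (Filter.eventually_ge_atTop 2)).exists
    obtain ⟨u, hu, v, hv, huX, hvX, h⟩ := arch n h2
    obtain ⟨t, ht, -⟩ := unbounded 2 0
    refine ⟨u, ?_, t, ht, (ReachOn.mono_set (t := Y \ R 1) h fun w hw => ⟨?_, hw.2⟩).trans
      ((join n h2 t ht v ?_).symm planeGrid_symm)⟩
    · by_contra hc
      exact hn u (.inr ⟨hu, hc⟩) huX
    · by_contra hc
      exact hn w (.inl hc) hw.1
    · rwa [hTeq n hn']
  choose a haR hak hat using fun i : Fin 3 => base i (by omega)
  have sub : ∀ {i j : ℕ}, i ≠ j → R i ∩ Y ⊆ Y \ R j :=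
    fun hij v hv => ⟨hv.2, fun hv' => hij (ne hv.1 hv')⟩
  have across : ∀ (i j : Fin 3) (l : ℕ), (i : ℕ) ≠ l → (j : ℕ) ≠ l → ∀ u ∈ T i, ∀ v ∈ T j,
      ReachOn planeGrid (Y \ R l) u v → ReachOn planeGrid (Y \ R l) (a i) (a j) :=
    fun i j l hi hj u hu v hv h => ((hat i u hu).mono_set (sub hi)).trans
      (h.trans (((hat j v hv).mono_set (sub hj)).symm planeGrid_symm))
  have near : ∀ (j l : ℕ), l ≠ j → l ≠ j + 1 → ∃ u ∈ T j, ∃ v ∈ T (j + 1),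
      ReachOn planeGrid (Y \ R l) u v := by
    intro j l h1 h2
    obtain ⟨u, hu, v, hv, h⟩ := link j
    refine ⟨u, hu, v, hv, h.mono_set fun w hw => ⟨hw.1, fun hl => ?_⟩⟩
    have := hw.2 l hl
    omega
  obtain ⟨u01, hu01, v01, hv01, h01⟩ := near 0 2 (by omega) (by omega)
  obtain ⟨u12, hu12, v12, hv12, h12⟩ := near 1 0 (by omega) (by omega)
  obtain ⟨u02, hu02, v02, hv02, h02⟩ := far
  have distinct : ∀ i j : Fin 3, i ≠ j → a i ≠ a j := fun i j hij h =>
    hij (Fin.ext (ne (haR i) (h ▸ haR j)))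
  have escape : ∀ (i : Fin 3) M, ∃ z, ReachOn planeGrid (R i ∩ Y) (a i) z ∧ M ≤ gridHeight z := by
    intro i M
    obtain ⟨z, hz, hM⟩ := unbounded i M
    exact ⟨z, hat i z hz, hM⟩
  exact not_three_mutually_linked hY (hak 0) (hak 1) (hak 2) (distinct 0 1 (by decide))
    (distinct 1 2 (by decide)) (distinct 0 2 (by decide)) (escape 0) (escape 1) (escape 2)
    (across 0 1 2 (by decide) (by decide) u01 hu01 v01 hv01 h01)
    (across 1 2 0 (by decide) (by decide) u12 hu12 v12 hv12 h12)
    (across 0 2 1 (by decide) (by decide) u02 hu02 v02 hv02 h02)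

end Obstruction

section Girders

variable {D : Digraph V} {R : ℕ → Set V} {n : ℕ} {L : List V}

theorem VisitsDown.reverse (h : VisitsDown R n L) : VisitsUp R n L.reverse := by
  obtain ⟨h1, h2, h3⟩ := h
  refine ⟨by simpa using h1, by simpa using h2, fun s t hs ht hst j j' hj hj' => ?_⟩
  rw [List.length_reverse] at hs ht
  simp only [List.get_eq_getElem, List.getElem_reverse] at hj hj'
  exact h3 _ _ (by omega) (by omega) (by omega) j' j hj' hj

/-- An upward staircase contains a path between any two consecutive necklaces avoiding all the
others. -/
theorem VisitsUp.exists_reachOn (h : VisitsUp R n L)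
    (hR : ∀ i j, i ≠ j → Disjoint (R i) (R j)) (hL : L.IsChain D.Adj) {j : ℕ} (hj : j < n) :
    ∃ u ∈ R j, ∃ v ∈ R (j + 1), u ∈ L ∧ v ∈ L ∧
      ReachOn D {w ∈ {w | w ∈ L} | ∀ i, w ∈ R i → i = j ∨ i = j + 1} u v := by
  obtain ⟨h1, -, h3⟩ := h
  have ne : ∀ {i j v}, v ∈ R i → v ∈ R j → i = j := fun {i j v} h h' => by
    by_contra hij
    exact Set.disjoint_left.1 (hR i j hij) h h'
  obtain ⟨u, huL, hu⟩ := h1 j hj.le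
  obtain ⟨v, hvL, hv⟩ := h1 (j + 1) hj
  obtain ⟨s, hs, rfl⟩ := List.getElem_of_mem huL
  obtain ⟨t, ht, rfl⟩ := List.getElem_of_mem hvL
  have hst : s ≤ t := by
    by_contra! hts
    have := h3 t s ht hs hts _ _ hv hu
    omega
  refine ⟨_, hu, _, hv, huL, hvL, reachOn_of_isChain hL hst ht fun i hi hsi hit =>
    ⟨List.getElem_mem hi, fun m hm => ?_⟩⟩
  have lower : j ≤ m := by
    rcases hsi.eq_or_lt with rfl | hsi
    · exact (ne hu hm).le
    · exact h3 s i hs hi hsi _ _ hu hm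
  have upper : m ≤ j + 1 := by
    rcases hit.eq_or_lt with rfl | hit
    · exact (ne hm hv).le
    · exact h3 i t hi ht hit _ _ hm hv
  omega

/-- An arch between two necklaces meets no other necklace. -/
theorem InternallyAvoids.exists_reachOn (h : InternallyAvoids L (NeckUnion R))
    (hR : ∀ i j, i ≠ j → Disjoint (R i) (R j)) (hL : L.IsChain D.Adj) {a b : ℕ}
    (ha : StartsIn L (R a)) (hb : EndsIn L (R b)) :
    ∃ u ∈ R a, ∃ v ∈ R b, u ∈ L ∧ v ∈ L ∧
      ReachOn D {w ∈ {w | w ∈ L} | ∀ i, w ∈ R i → i = a ∨ i = b} u v := by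
  have ne : ∀ {i j v}, v ∈ R i → v ∈ R j → i = j := fun {i j v} h h' => by
    by_contra hij
    exact Set.disjoint_left.1 (hR i j hij) h h'
  obtain ⟨u, hu, huL⟩ := ha
  obtain ⟨v, hv, hvL⟩ := hb
  refine ⟨u, hu, v, hv, List.mem_of_head? huL, List.mem_of_getLast? hvL, ?_⟩
  obtain ⟨L, rfl⟩ := List.head?_eq_some_iff.1 huL
  rcases L.eq_nil_or_concat' with rfl | ⟨L, w, rfl⟩
  · obtain rfl : u = v := by simpa using hvL
    exact .refl
  obtain rfl : w = v := by
    rw [← List.cons_append] at hvL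
    simpa only [List.getLast?_concat, Option.some.injEq] using hvL
  have := reachOn_of_isChain
    (S := {x ∈ {x | x ∈ u :: (L ++ [w])} | ∀ i, x ∈ R i → i = a ∨ i = b}) hL
    (Nat.zero_le (L.length + 1)) (by simp) fun i hi _ _ => ⟨List.getElem_mem hi, fun m hm => ?_⟩
  · simpa using this
  · have hmem := List.getElem_mem hi
    generalize (u :: (L ++ [w]))[i] = x at hm hmem
    simp only [List.mem_cons, List.mem_append, List.not_mem_nil, or_false] at hmem
    rcases hmem with rfl | hx | rfl
    · exact .inl (ne hm hu)
    · exact absurd (Set.mem_iUnion.2 ⟨m, hm⟩) (h x (by simpa [Internals] using hx))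
    · exact .inr (ne hm hv)

/-- No subgraph of the plane grid is a dominated directed necklace grid. -/
theorem not_isDomDirNecklaceGrid {B : Digraph (ℕ × ℕ)}
    (hB : ∀ u v, B.Adj u v → planeGrid.Adj u v) {R : ℕ → Set (ℕ × ℕ)}
    {H : ℕ → ℕ → Set (ℕ × ℕ)} {Gird : ℕ → List (ℕ × ℕ)} :
    ¬ (IsDomDirNecklaceGridOut B R H Gird ∨ IsDomDirNecklaceGridIn B R H Gird) := by
  intro hdom
  have base : IsNecklaceGridBase B R H Gird := hdom.elim And.left And.left
  have parts : ∀ n, 1 ≤ n → ∃ U W : List (ℕ × ℕ), U ⊆ Gird n ∧ W ⊆ Gird n ∧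
      U.IsChain planeGrid.Adj ∧ W.IsChain planeGrid.Adj ∧ VisitsUp R n U ∧
      InternallyAvoids W (NeckUnion R) ∧
      ((StartsIn W (R 0) ∧ EndsIn W (R n)) ∨ (StartsIn W (R n) ∧ EndsIn W (R 0))) := by
    intro n hn
    have chain : (Gird n).IsChain planeGrid.Adj :=
      List.IsChain.imp (fun u v => hB u v) (base.gpath n hn).2.2
    rcases hdom with hdom | hdom
    · obtain ⟨U, W, e, -, -, -, -, hU, hs, he, hW⟩ := hdom.2 n hn
      rw [e] at chain ⊢
      exact ⟨U, W, by simp, by simp, chain.left_of_append, chain.right_of_append, hU, hW,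
        .inr ⟨hs, he⟩⟩
    · obtain ⟨W, U, e, -, -, hs, he, hW, -, -, hU⟩ := hdom.2 n hn
      rw [e] at chain ⊢
      refine ⟨U.reverse, W, by simp, by simp, ?_, chain.left_of_append, hU.reverse, hW,
        .inl ⟨hs, he⟩⟩
      exact List.isChain_reverse.2
        (chain.right_of_append.imp fun u v => planeGrid_symm u v)
  refine not_dominated_in_planeGrid (X := fun n => {w | w ∈ Gird n}) base.disj
    (fun i => (base.neckwit i).mono hB)
    (fun m n hm hn hmn => Set.disjoint_left.2 (base.gdisj m n hm hn hmn)) ?_ ?_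
  · intro n j hj
    obtain ⟨U, W, hUG, -, hUc, -, hU, -⟩ := parts n (by omega)
    obtain ⟨u, hu, v, hv, huU, hvU, h⟩ := hU.exists_reachOn base.disj hUc hj
    exact ⟨u, hu, v, hv, hUG huU, hUG hvU, h.mono_set fun w hw => ⟨hUG hw.1, hw.2⟩⟩
  · intro n hn
    obtain ⟨U, W, -, hWG, -, hWc, -, hW, h⟩ := parts n (by omega)
    have sub : ∀ {a b : ℕ}, a ≠ 1 → b ≠ 1 →
        {w ∈ {w | w ∈ W} | ∀ i, w ∈ R i → i = a ∨ i = b} ⊆ {w | w ∈ Gird n} \ R 1 :=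
      fun ha hb w hw => ⟨hWG hw.1, fun h1 => (hw.2 1 h1).elim ha.symm hb.symm⟩
    rcases h with ⟨hs, he⟩ | ⟨hs, he⟩
    · obtain ⟨u, hu, v, hv, huW, hvW, h⟩ := hW.exists_reachOn base.disj hWc hs he
      exact ⟨u, hu, v, hv, hWG huW, hWG hvW, h.mono_set (sub (by omega) (by omega))⟩
    · obtain ⟨u, hu, v, hv, huW, hvW, h⟩ := hW.exists_reachOn base.disj hWc hs he
      exact ⟨v, hv, u, hu, hWG hvW, hWG huW,
        (h.mono_set (sub (by omega) (by omega))).symm planeGrid_symm⟩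

end Girders

section Construction

/-- The bidirected grid: columns are bidirected rays, edges to the next column lead from
`(i, 8 * m + 10)` to `(i + 1, 8 * m)`, and edges back from `(i + 1, 8 * m + 4)` to
`(i, 8 * m + 14)`. -/
def stairGrid : Digraph (ℕ × ℕ) where
  Adj u v := (u.1 = v.1 ∧ (v.2 = u.2 + 1 ∨ u.2 = v.2 + 1)) ∨
    (v.1 = u.1 + 1 ∧ u.2 = v.2 + 10 ∧ v.2 % 8 = 0) ∨
    (u.1 = v.1 + 1 ∧ v.2 = u.2 + 10 ∧ u.2 % 8 = 4)

theorem stairGrid_adj_planeGrid (u v : ℕ × ℕ) (h : stairGrid.Adj u v) : planeGrid.Adj u v := by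
  simp only [stairGrid, planeGrid, gridHeight] at *
  omega

def stairColumn (i : ℕ) : Set (ℕ × ℕ) := {v | v.1 = i}

def stairPiece (i l : ℕ) : Set (ℕ × ℕ) := {v | v.1 = i ∧ (v.2 = l ∨ v.2 = l + 1)}

/-- The upward staircase from column `i` to column `i + m`. -/
def upStair : ℕ → ℕ → List (ℕ × ℕ)
  | i, 0 => [(i, 0), (i, 1), (i, 2), (i, 3)]
  | i, m + 1 => (i, 8 * m + 8) :: (i, 8 * m + 9) :: (i, 8 * m + 10) :: upStair (i + 1) m

/-- The downward staircase from column `i + m` to column `i`. -/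
def downStair : ℕ → ℕ → List (ℕ × ℕ)
  | i, 0 => [(i, 4)]
  | i, m + 1 => downStair (i + 1) m ++ [(i, 8 * m + 14), (i, 8 * m + 13), (i, 8 * m + 12)]

theorem head?_upStair (i m : ℕ) : (upStair i m).head? = some (i, 8 * m) := by
  cases m <;> simp [upStair]; omega

theorem getLast?_upStair (i m : ℕ) : (upStair i m).getLast? = some (i + m, 3) := by
  induction m generalizing i with
  | zero => simp [upStair]
  | succ m ih => simp [upStair, List.getLast?_cons, ih]; omega

theorem head?_downStair (i m : ℕ) : (downStair i m).head? = some (i + m, 4) := by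
  induction m generalizing i with
  | zero => simp [downStair]
  | succ m ih => simp [downStair, ih]; omega

theorem getLast?_downStair (i m : ℕ) : (downStair i m).getLast? = some (i, 8 * m + 4) := by
  cases m <;> simp [downStair]; omega

theorem mem_upStair {i m : ℕ} {v : ℕ × ℕ} (h : v ∈ upStair i m) :
    i ≤ v.1 ∧ v.1 ≤ i + m ∧ 8 * (i + m) ≤ 8 * v.1 + v.2 ∧ 8 * v.1 + v.2 ≤ 8 * (i + m) + 3 := by
  induction m generalizing i with
  | zero =>
    simp only [upStair, List.mem_cons, List.not_mem_nil, or_false] at h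
    rcases h with rfl | rfl | rfl | rfl <;> simp
  | succ m ih =>
    simp only [upStair, List.mem_cons] at h
    rcases h with rfl | rfl | rfl | h
    · dsimp only; omega
    · dsimp only; omega
    · dsimp only; omega
    · have := ih h
      omega

theorem mem_downStair {i m : ℕ} {v : ℕ × ℕ} (h : v ∈ downStair i m) :
    i ≤ v.1 ∧ v.1 ≤ i + m ∧ 8 * (i + m) + 4 ≤ 8 * v.1 + v.2 ∧
      8 * v.1 + v.2 ≤ 8 * (i + m) + 6 := by
  induction m generalizing i with
  | zero =>
    simp only [downStair, List.mem_cons, List.not_mem_nil, or_false] at h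
    subst h
    simp
  | succ m ih =>
    simp only [downStair, List.mem_append, List.mem_cons, List.not_mem_nil, or_false] at h
    rcases h with h | rfl | rfl | rfl
    · have := ih h
      omega
    · dsimp only; omega
    · dsimp only; omega
    · dsimp only; omega

theorem isChain_upStair (i m : ℕ) : (upStair i m).IsChain stairGrid.Adj := by
  induction m generalizing i with
  | zero => simp [upStair, stairGrid]
  | succ m ih =>
    simp only [upStair, List.isChain_cons, List.head?_cons, head?_upStair]
    refine ⟨?_, ?_, ?_, ih _⟩ <;> simp [stairGrid]

theorem isChain_downStair (i m : ℕ) : (downStair i m).IsChain stairGrid.Adj := by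
  induction m generalizing i with
  | zero => simp [downStair]
  | succ m ih =>
    rw [downStair, List.isChain_append]
    refine ⟨ih _, by simp [stairGrid], ?_⟩
    simp [getLast?_downStair, stairGrid]

theorem pairwise_upStair (i m : ℕ) :
    (upStair i m).Pairwise fun u v => u ≠ v ∧ u.1 ≤ v.1 := by
  induction m generalizing i with
  | zero => simp [upStair]
  | succ m ih =>
    have lt : ∀ v ∈ upStair (i + 1) m, i < v.1 := fun v hv => (mem_upStair hv).1
    have ne : ∀ h, ∀ v ∈ upStair (i + 1) m, (i, h) ≠ v ∧ i ≤ v.1 := fun h v hv =>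
      ⟨fun e => absurd (lt v hv) (by simp [← e]), (lt v hv).le⟩
    simp only [upStair, List.pairwise_cons, List.mem_cons, forall_eq_or_imp]
    exact ⟨⟨by simp, by simp, ne _⟩, ⟨by simp, ne _⟩, ne _, ih _⟩

theorem pairwise_downStair (i m : ℕ) :
    (downStair i m).Pairwise fun u v => u ≠ v ∧ v.1 ≤ u.1 := by
  induction m generalizing i with
  | zero => simp [downStair]
  | succ m ih =>
    rw [downStair, List.pairwise_append]
    refine ⟨ih _, by simp, fun u hu v hv => ?_⟩
    have := (mem_downStair hu).1
    have hv1 : v.1 = i := by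
      simp only [List.mem_cons, List.not_mem_nil, or_false] at hv
      rcases hv with rfl | rfl | rfl <;> rfl
    exact ⟨fun e => by rw [e] at this; omega, by omega⟩

theorem upStair_eq_append (i m : ℕ) : ∃ l, upStair 0 (i + m) = l ++ upStair i m := by
  induction i generalizing m with
  | zero => exact ⟨[], by simp⟩
  | succ i ih =>
    obtain ⟨l, hl⟩ := ih (m + 1)
    exact ⟨l ++ [(i, 8 * m + 8), (i, 8 * m + 9), (i, 8 * m + 10)], by
      rw [show i + 1 + m = i + (m + 1) by omega, hl]; simp [upStair]⟩

theorem downStair_eq_append (i m : ℕ) : ∃ l, downStair 0 (i + m) = downStair i m ++ l := by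
  induction i generalizing m with
  | zero => exact ⟨[], by simp⟩
  | succ i ih =>
    obtain ⟨l, hl⟩ := ih (m + 1)
    exact ⟨[(i, 8 * m + 14), (i, 8 * m + 13), (i, 8 * m + 12)] ++ l, by
      rw [show i + 1 + m = i + (m + 1) by omega, hl]; simp [downStair]⟩

def stairGirder (n : ℕ) : List (ℕ × ℕ) := upStair 0 n ++ downStair 0 n

theorem mem_stairGirder {n : ℕ} {v : ℕ × ℕ} (h : v ∈ stairGirder n) :
    8 * n ≤ 8 * v.1 + v.2 ∧ 8 * v.1 + v.2 ≤ 8 * n + 6 := by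
  rcases List.mem_append.1 h with h | h
  · have := mem_upStair h
    omega
  · have := mem_downStair h
    omega

theorem isDipath_stairGirder (n : ℕ) : IsDipath stairGrid (stairGirder n) := by
  refine ⟨?_, ?_, ?_⟩
  · intro h
    have := head?_upStair 0 n
    simp [List.append_eq_nil_iff.1 h |>.1] at this
  · refine List.nodup_append.2 ⟨(pairwise_upStair 0 n).imp And.left,
      (pairwise_downStair 0 n).imp And.left, fun u hu v hv e => ?_⟩
    have h1 := mem_upStair hu
    have h2 := mem_downStair hv
    rw [e] at h1
    omega
  · refine List.isChain_append.2 ⟨isChain_upStair 0 n, isChain_downStair 0 n, ?_⟩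
    simp [getLast?_upStair, head?_downStair, stairGrid]

theorem consecIn_stairGirder {u v : ℕ × ℕ} (h : stairGrid.Adj u v) (huv : u.1 ≠ v.1) :
    ∃ n, 1 ≤ n ∧ ConsecIn (stairGirder n) u v := by
  obtain ⟨i, a⟩ := u
  obtain ⟨j, b⟩ := v
  rcases h with h | ⟨h1, h2, h3⟩ | ⟨h1, h2, h3⟩
  · exact absurd h.1 huv
  · dsimp only at h1 h2 h3
    subst h1 h2
    obtain ⟨m, rfl⟩ : ∃ m, b = 8 * m := ⟨b / 8, by omega⟩
    obtain ⟨l, hl⟩ := upStair_eq_append i (m + 1)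
    obtain ⟨l', hl'⟩ := List.head?_eq_some_iff.1 (head?_upStair (i + 1) m)
    refine ⟨i + (m + 1), by omega, l ++ [(i, 8 * m + 8), (i, 8 * m + 9)],
      l' ++ downStair 0 (i + (m + 1)), ?_⟩
    rw [stairGirder, hl]
    simp [upStair, hl']
  · dsimp only at h1 h2 h3
    subst h1 h2
    obtain ⟨m, rfl⟩ : ∃ m, a = 8 * m + 4 := ⟨a / 8, by omega⟩
    obtain ⟨l, hl⟩ := downStair_eq_append j (m + 1)
    obtain ⟨l', hl'⟩ := List.getLast?_eq_some_iff.1 (getLast?_downStair (j + 1) m)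
    refine ⟨j + (m + 1), by omega, upStair 0 (j + (m + 1)) ++ l',
      (j, 8 * m + 13) :: (j, 8 * m + 12) :: l, ?_⟩
    rw [stairGirder, hl]
    simp [downStair, hl']

theorem isNecklaceWitness_stairPiece (i : ℕ) :
    IsNecklaceWitness stairGrid (stairColumn i) (stairPiece i) := by
  refine ⟨fun n => ⟨?_, ⟨(i, n), rfl, .inl rfl⟩, ?_⟩, ?_, fun a b => ⟨?_, fun h => ?_⟩⟩
  · refine (Set.toFinite {(i, n), (i, n + 1)}).subset ?_
    rintro ⟨x, y⟩ ⟨h1, h2 | h2⟩ <;> dsimp only at h1 h2 <;> simp [h1, h2]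
  · intro u hu v hv
    by_cases huv : u = v
    · rw [huv]
      exact .refl
    · refine .single ⟨hu, hv, ?_⟩
      rw [Prod.ext_iff] at huv
      obtain ⟨h1, h2⟩ := hu
      obtain ⟨h3, h4⟩ := hv
      simp only [stairGrid]
      omega
  · ext v
    simp only [Set.mem_iUnion]
    exact ⟨fun h => ⟨v.2, h, .inl rfl⟩, fun ⟨_, h⟩ => h.1⟩
  · rintro ⟨v, ⟨-, h1⟩, ⟨-, h2⟩⟩
    omega
  · refine ⟨(i, max a b), ⟨rfl, ?_⟩, ⟨rfl, ?_⟩⟩ <;> dsimp only <;> omega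

theorem necklaceAttachOK_stairPiece (i : ℕ) :
    NecklaceAttachOK stairGrid (stairColumn i) (stairPiece i) := by
  constructor
  · rintro l ⟨k, rfl⟩ ⟨⟨a, b⟩, ⟨c, d⟩⟩ ⟨h1, h2⟩ ⟨⟨a', b'⟩, ⟨c', d'⟩⟩ ⟨h3, h4⟩
    simp only [stairGrid, stairColumn, stairPiece, Set.mem_ofPred_eq] at h1 h2 h3 h4
    simp only [Prod.mk.injEq]
    omega
  · intro l _
    rw [Set.eq_empty_iff_forall_notMem]
    have empty : ∀ v, v ∉ stairPiece i l \ (stairPiece i (l - 1) ∪ stairPiece i (l + 1)) := by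
      rintro v ⟨⟨h1, h2⟩, h3⟩
      refine h3 ?_
      rcases h2 with h2 | h2
      · refine .inl ⟨h1, ?_⟩
        omega
      · exact .inr ⟨h1, .inl h2⟩
    rintro e ⟨-, ⟨h, -⟩ | ⟨h, -⟩⟩
    · exact empty _ h
    · exact empty _ h

theorem isBidirNecklaceGrid_stairGrid :
    IsBidirNecklaceGrid stairGrid stairColumn stairPiece stairGirder := by
  refine ⟨⟨?_, isNecklaceWitness_stairPiece, necklaceAttachOK_stairPiece,
    fun n _ => isDipath_stairGirder n, ?_, ?_, ?_⟩, fun n _ => ?_⟩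
  · intro i j hij
    exact Set.disjoint_left.2 fun v hi hj => hij (hi.symm.trans hj)
  · intro m n _ _ hmn v hm hn
    have h1 := mem_stairGirder hm
    have h2 := mem_stairGirder hn
    omega
  · rintro m n - hmn i l l' ⟨u, hu, hu1, hu2⟩ ⟨v, hv, hv1, hv2⟩
    have h1 := mem_stairGirder hu
    have h2 := mem_stairGirder hv
    omega
  · intro u v huv
    by_cases h : u.1 = v.1
    · exact .inl ⟨v.1, h, rfl⟩
    · exact .inr (consecIn_stairGirder huv h)
  · refine ⟨upStair 0 n, downStair 0 n, rfl, ?_, ?_, ⟨_, rfl, head?_upStair 0 n⟩,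
      ⟨_, ?_, getLast?_upStair 0 n⟩, ⟨?_, ?_, ?_⟩, ⟨_, ?_, head?_downStair 0 n⟩,
      ⟨_, rfl, getLast?_downStair 0 n⟩, ⟨?_, ?_, ?_⟩⟩
    · intro h
      simpa [h] using head?_upStair 0 n
    · intro h
      simpa [h] using head?_downStair 0 n
    · exact Nat.zero_add n
    · intro j hj
      obtain ⟨l, hl⟩ := upStair_eq_append j (n - j)
      rw [Nat.add_sub_cancel' hj] at hl
      exact ⟨_, hl ▸ List.mem_append_right _ (List.mem_of_head? (head?_upStair j (n - j))), rfl⟩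
    · rintro v hv _ rfl
      have := mem_upStair hv
      omega
    · rintro s t hs ht hst _ _ rfl rfl
      exact (List.pairwise_iff_get.1 (pairwise_upStair 0 n) ⟨s, hs⟩ ⟨t, ht⟩ hst).2
    · exact Nat.zero_add n
    · intro j hj
      obtain ⟨l, hl⟩ := downStair_eq_append j (n - j)
      rw [Nat.add_sub_cancel' hj] at hl
      exact ⟨_, hl ▸ List.mem_append_left _
        (List.mem_of_getLast? (getLast?_downStair j (n - j))), rfl⟩
    · rintro v hv _ rfl
      have := mem_downStair hv
      omega
    · rintro s t hs ht hst _ _ rfl rfl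
      exact (List.pairwise_iff_get.1 (pairwise_downStair 0 n) ⟨s, hs⟩ ⟨t, ht⟩ hst).2

theorem necksAreBidirRays_stairGrid :
    NecksAreBidirRays stairGrid stairColumn fun i h => (i, h) := by
  refine fun i => ⟨Prod.mk_right_injective i, ?_, fun n => by simp [stairGrid]⟩
  ext ⟨a, b⟩
  simp [stairColumn, eq_comm]

end Construction

/-- Lemma 7.4: there exists a bidirected necklace grid, with vertical necklaces
bidirected rays, containing no dominated directed necklace grid (of either orientation)
as a subgraph. -/
theorem stmt15 : ∃ (V : Type) (G : Digraph V) (neck : ℕ → Set V)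
    (H : ℕ → ℕ → Set V) (Gird : ℕ → List V) (r : ℕ → ℕ → V),
    IsBidirNecklaceGrid G neck H Gird ∧ NecksAreBidirRays G neck r ∧
    ¬ ∃ (B : Digraph V) (neck' : ℕ → Set V) (H' : ℕ → ℕ → Set V) (Gird' : ℕ → List V),
      (∀ u v, B.Adj u v → G.Adj u v) ∧
      (IsDomDirNecklaceGridOut B neck' H' Gird' ∨
        IsDomDirNecklaceGridIn B neck' H' Gird') := by
  exact ⟨ℕ × ℕ, stairGrid, stairColumn, stairPiece, stairGirder, fun i h => (i, h),
    isBidirNecklaceGrid_stairGrid, necksAreBidirRays_stairGrid, fun ⟨_, _, _, _, hB, h⟩ =>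
      not_isDomDirNecklaceGrid (fun u v huv => stairGrid_adj_planeGrid u v (hB u v huv)) h⟩
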